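/- Let ((f_n),(τ_n)) be a p-ASF for the Banach space X and let (ω_n)_{n∈ℕ} be a sequence in X. Suppose there exist α, β, γ ≥ 0 with max{α + γ·‖θ_f S_{f,τ}^{-1}‖, β} < 1 such that for every m ≥ 1 and all scalars c_1, …, c_m, ‖∑_{n=1}^m c_n (τ_n − ω_n)‖ ≤ α·‖∑_{n=1}^m c_n τ_n‖ + γ·(∑_{n=1}^m |c_n|^p)^{1/p} + β·‖∑_{n=1}^m c_n ω_n‖. Then ((f_n),(ω_n)) is a p-ASF for X, and its frame operator S_{f,ω} satisfies a·‖x‖ ≤ ‖S_{f,ω} x‖ ≤ b·‖x‖ for all x ∈ X, with a = (1 − (α + γ·‖θ_f S_{f,τ}^{-1}‖)) / ((1+β)·‖S_{f,τ}^{-1}‖) and b = ((1+α)/(1−β)·‖θ_τ‖ + γ/(1−β))·‖θ_f‖. -/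

import Mathlib

open Filter
open scoped ENNReal

variable {𝕂 : Type*} [RCLike 𝕂] {X : Type*} [NormedAddCommGroup X] [NormedSpace 𝕂 X]
  [CompleteSpace X]

/-
The perturbation inequality bounds `‖∑ c_n ω_n‖` by a multiple of `(∑ ‖c_n‖ ^ p) ^ (1 / p)` over
finite sums, so `∑ a_n ω_n` is Cauchy for `a` in `ℓ^p` and defines a bounded `θω`. In the limit,
`‖θτ a - θω a‖ ≤ α ‖θτ a‖ + γ ‖a‖ + β ‖θω a‖`; taking `a = θf x` turns the term `γ ‖a‖` into
`γ ‖θf S⁻¹‖ ‖S x‖`, so `T = θω θf` satisfies `‖S x - T x‖ ≤ l ‖S x‖ + β ‖T x‖` with `l, β < 1`.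
Every operator on the segment from `1` to `T S⁻¹` is then bounded below by the same constant, and
invertibility propagates along the segment.
-/

section NormedGroup

variable {G : Type*} [SeminormedAddCommGroup G] {l m : ℝ} {y z w : G}

theorem norm_le_of_norm_sub_le {e : ℝ} (hm : m < 1) (h : ‖y - w‖ ≤ l * ‖y‖ + e + m * ‖w‖) :
    ‖w‖ ≤ ((1 + l) * ‖y‖ + e) / (1 - m) := by
  have hw : ‖w‖ ≤ ‖y‖ + ‖y - w‖ := norm_le_norm_add_norm_sub y w
  rw [le_div_iff₀ (sub_pos.2 hm)]
  linarith

theorem one_sub_mul_norm_le_of_between (hm₀ : 0 ≤ m) (hm : m ≤ 1)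
    (hz : ‖y - z‖ + ‖z - w‖ ≤ ‖y - w‖) (h : ‖y - w‖ ≤ l * ‖y‖ + m * ‖w‖) :
    (1 - l) * ‖y‖ ≤ (1 + m) * ‖z‖ := by
  have hy : ‖y‖ ≤ ‖z‖ + ‖y - z‖ := norm_le_norm_add_norm_sub' y z
  have hw : m * ‖w‖ ≤ m * (‖z‖ + ‖z - w‖) :=
    mul_le_mul_of_nonneg_left (norm_le_norm_add_norm_sub z w) hm₀
  have hzw : m * ‖z - w‖ ≤ 1 * ‖z - w‖ := by gcongr
  linarith

end NormedGroup

section Invertibility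

theorem isUnit_of_continuous_of_norm_inv_le {Y R : Type*} [TopologicalSpace Y] [PreconnectedSpace Y]
    [NormedRing R] [HasSummableGeomSeries R] {g : Y → R} (hg : Continuous g) {K : ℝ}
    (hK : ∀ (y : Y) (u : Rˣ), (u : R) = g y → ‖(↑u⁻¹ : R)‖ ≤ K) {x : Y} (hx : IsUnit (g x))
    (y : Y) : IsUnit (g y) := by
  have h_open : IsOpen {y | IsUnit (g y)} := Units.isOpen.preimage hg
  have h_closed : IsClosed {y | IsUnit (g y)} := by
    refine isClosed_of_closure_subset fun y hy => ?_
    have h_nhds : {z | K * ‖g z - g y‖ < 1} ∈ nhds y :=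
      (isOpen_lt (by fun_prop) continuous_const).mem_nhds (by simp)
    obtain ⟨z, hz, u, hu⟩ := mem_closure_iff_nhds.1 hy _ h_nhds
    have h_near : ‖1 - ↑u⁻¹ * g y‖ < 1 :=
      calc ‖1 - ↑u⁻¹ * g y‖ = ‖↑u⁻¹ * (g z - g y)‖ := by rw [mul_sub, ← hu, Units.inv_mul]
        _ ≤ ‖(↑u⁻¹ : R)‖ * ‖g z - g y‖ := norm_mul_le _ _
        _ ≤ K * ‖g z - g y‖ := by gcongr; exact hK z u hu
        _ < 1 := hz
    have h_unit : IsUnit (↑u⁻¹ * g y) := by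
      simpa only [sub_sub_cancel] using isUnit_one_sub_of_norm_lt_one h_near
    exact (Units.isUnit_units_mul u⁻¹ (g y)).1 h_unit
  exact (IsClopen.eq_univ ⟨h_closed, h_open⟩ ⟨x, hx⟩).ge (Set.mem_univ y)

variable {𝕜 E F : Type*} [RCLike 𝕜] [NormedAddCommGroup E] [NormedSpace 𝕜 E]
  [NormedAddCommGroup F] [NormedSpace 𝕜 F] {l m : ℝ}

theorem isUnit_of_norm_sub_le [CompleteSpace E] (T : E →L[𝕜] E) (hl : l < 1) (hm₀ : 0 ≤ m)
    (hm : m < 1) (h : ∀ x, ‖x - T x‖ ≤ l * ‖x‖ + m * ‖T x‖) : IsUnit T := by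
  let segment (t : unitInterval) : E →L[𝕜] E := AffineMap.lineMap 1 T ((t : ℝ) : 𝕜)
  have segment_apply (t : unitInterval) (x : E) :
      segment t x = AffineMap.lineMap x (T x) ((t : ℝ) : 𝕜) := by
    simp [segment, AffineMap.lineMap_apply_module']
  have segment_bound (t : unitInterval) (x : E) : (1 - l) * ‖x‖ ≤ (1 + m) * ‖segment t x‖ := by
    refine one_sub_mul_norm_le_of_between hm₀ hm.le (le_of_eq ?_) (h x)
    rw [segment_apply, ← dist_eq_norm, ← dist_eq_norm, ← dist_eq_norm, dist_left_lineMap,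
      dist_lineMap_right, ← RCLike.ofReal_one, ← RCLike.ofReal_sub, RCLike.norm_ofReal,
      RCLike.norm_ofReal, abs_of_nonneg t.2.1, abs_of_nonneg (sub_nonneg.2 t.2.2)]
    ring
  have segment_inv_bound (t : unitInterval) (u : (E →L[𝕜] E)ˣ) (hu : ↑u = segment t) :
      ‖(↑u⁻¹ : E →L[𝕜] E)‖ ≤ (1 + m) / (1 - l) := by
    refine ContinuousLinearMap.opNorm_le_bound _ (by have := sub_pos.2 hl; positivity) fun x => ?_
    have hx : segment t ((↑u⁻¹ : E →L[𝕜] E) x) = x := by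
      rw [← hu, ← mul_apply_eq_comp, Units.mul_inv, one_apply_eq_self]
    have := segment_bound t ((↑u⁻¹ : E →L[𝕜] E) x)
    rw [hx] at this
    rwa [div_mul_eq_mul_div, le_div_iff₀' (sub_pos.2 hl)]
  have h_start : IsUnit (segment 0) := by simp [segment]
  have h_end : segment 1 = T := by simp [segment]
  exact h_end ▸ isUnit_of_continuous_of_norm_inv_le (by fun_prop) segment_inv_bound h_start 1

theorem exists_continuousLinearEquiv_of_norm_sub_le [CompleteSpace F] (S : E ≃L[𝕜] F)
    (T : E →L[𝕜] F) (hl : l < 1) (hm₀ : 0 ≤ m) (hm : m < 1)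
    (h : ∀ x, ‖S x - T x‖ ≤ l * ‖S x‖ + m * ‖T x‖) : ∃ T' : E ≃L[𝕜] F, (T' : E →L[𝕜] F) = T := by
  obtain ⟨u, hu⟩ := isUnit_of_norm_sub_le (T.comp (S.symm : F →L[𝕜] E)) hl hm₀ hm fun y => by
    simpa using h (S.symm y)
  refine ⟨S.trans (ContinuousLinearEquiv.ofUnit u), ContinuousLinearMap.ext fun x => ?_⟩
  calc ContinuousLinearEquiv.ofUnit u (S x) = (u : F →L[𝕜] F) (S x) := rfl
    _ = T x := by rw [hu]; simp

theorem le_norm_of_norm_sub_le (S : E ≃L[𝕜] F) {T : E →L[𝕜] F} (hl : l ≤ 1) (hm₀ : 0 ≤ m)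
    (hm : m ≤ 1) {x : E} (h : ‖S x - T x‖ ≤ l * ‖S x‖ + m * ‖T x‖) :
    (1 - l) / ((1 + m) * ‖(S.symm : F →L[𝕜] E)‖) * ‖x‖ ≤ ‖T x‖ := by
  have hx : ‖x‖ ≤ ‖(S.symm : F →L[𝕜] E)‖ * ‖S x‖ := by
    simpa using (S.symm : F →L[𝕜] E).le_opNorm (S x)
  have hSx : (1 - l) * ‖S x‖ ≤ (1 + m) * ‖T x‖ :=
    one_sub_mul_norm_le_of_between hm₀ hm (by simp) h
  rw [div_mul_eq_mul_div]
  refine div_le_of_le_mul₀ (by positivity) (norm_nonneg _) ?_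
  calc (1 - l) * ‖x‖ ≤ (1 - l) * (‖(S.symm : F →L[𝕜] E)‖ * ‖S x‖) :=
        mul_le_mul_of_nonneg_left hx (sub_nonneg.2 hl)
    _ = ‖(S.symm : F →L[𝕜] E)‖ * ((1 - l) * ‖S x‖) := by ring
    _ ≤ ‖(S.symm : F →L[𝕜] E)‖ * ((1 + m) * ‖T x‖) := by gcongr
    _ = ‖T x‖ * ((1 + m) * ‖(S.symm : F →L[𝕜] E)‖) := by ring

end Invertibility

section RelativelyBounded

variable {𝕜 E F G : Type*} [NontriviallyNormedField 𝕜] [NormedAddCommGroup E] [NormedSpace 𝕜 E]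
  [NormedAddCommGroup F] [NormedSpace 𝕜 F] [NormedAddCommGroup G] [NormedSpace 𝕜 G]
  {A B : F →L[𝕜] G} {α β γ : ℝ}

theorem opNorm_le_of_norm_sub_le (hα : 0 ≤ α) (hγ : 0 ≤ γ) (hβ : β < 1)
    (h : ∀ y, ‖A y - B y‖ ≤ α * ‖A y‖ + γ * ‖y‖ + β * ‖B y‖) :
    ‖B‖ ≤ (1 + α) / (1 - β) * ‖A‖ + γ / (1 - β) := by
  have : 0 < 1 - β := sub_pos.2 hβ
  refine B.opNorm_le_bound (by positivity) fun y => ?_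
  calc ‖B y‖ ≤ ((1 + α) * ‖A y‖ + γ * ‖y‖) / (1 - β) := norm_le_of_norm_sub_le hβ (h y)
    _ ≤ ((1 + α) * (‖A‖ * ‖y‖) + γ * ‖y‖) / (1 - β) := by gcongr; exact A.le_opNorm y
    _ = ((1 + α) / (1 - β) * ‖A‖ + γ / (1 - β)) * ‖y‖ := by ring

theorem norm_sub_comp_le {R : E →L[𝕜] F} {S : E ≃L[𝕜] G} (hS : (S : E →L[𝕜] G) = A.comp R)
    (hγ : 0 ≤ γ) (h : ∀ y, ‖A y - B y‖ ≤ α * ‖A y‖ + γ * ‖y‖ + β * ‖B y‖) (x : E) :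
    ‖S x - B.comp R x‖ ≤
      (α + γ * ‖R.comp (S.symm : G →L[𝕜] E)‖) * ‖S x‖ + β * ‖B.comp R x‖ := by
  have hSx : A (R x) = S x := (DFunLike.congr_fun hS x).symm
  have hRx : ‖R x‖ ≤ ‖R.comp (S.symm : G →L[𝕜] E)‖ * ‖S x‖ := by
    simpa using (R.comp (S.symm : G →L[𝕜] E)).le_opNorm (S x)
  calc ‖S x - B (R x)‖ ≤ α * ‖S x‖ + γ * ‖R x‖ + β * ‖B (R x)‖ := by simpa only [hSx] using h (R x)
    _ ≤ α * ‖S x‖ + γ * (‖R.comp (S.symm : G →L[𝕜] E)‖ * ‖S x‖) + β * ‖B (R x)‖ := by gcongr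
    _ = _ := by rw [ContinuousLinearMap.comp_apply]; ring

end RelativelyBounded

theorem summable_of_norm_sum_le {ι F G : Type*} [NormedAddCommGroup F] [NormedAddCommGroup G]
    [CompleteSpace G] {u : ι → F} {v : ι → G} {C : ℝ} (hu : Summable u)
    (h : ∀ s : Finset ι, ‖∑ i ∈ s, v i‖ ≤ C * ‖∑ i ∈ s, u i‖) : Summable v := by
  rw [summable_iff_vanishing_norm]
  intro ε hε
  have hε' : 0 < ε / (|C| + 1) := by positivity
  obtain ⟨s, hs⟩ := hu.vanishing (Metric.ball_mem_nhds 0 hε')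
  refine ⟨s, fun t hts => ?_⟩
  calc ‖∑ i ∈ t, v i‖ ≤ C * ‖∑ i ∈ t, u i‖ := h t
    _ ≤ (|C| + 1) * ‖∑ i ∈ t, u i‖ := by gcongr; linarith [le_abs_self C]
    _ < ε := (lt_div_iff₀' (by positivity)).1 (mem_ball_zero_iff.1 (hs t hts))

section Synthesis

variable {𝕜 ι E : Type*} [NontriviallyNormedField 𝕜] [NormedAddCommGroup E] [NormedSpace 𝕜 E]
  {p : ℝ≥0∞}

theorem hasSum_lp_single_smul [DecidableEq ι] (τ : ι → E) (i : ι) (c : 𝕜) :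
    HasSum (fun j => lp.single (E := fun _ : ι => 𝕜) p i c j • τ j) (c • τ i) := by
  have h_off (j : ι) (hj : j ≠ i) : lp.single (E := fun _ : ι => 𝕜) p i c j • τ j = 0 := by
    rw [lp.single_apply_ne _ _ _ hj, zero_smul]
  simpa only [lp.single_apply_self] using hasSum_single i h_off

variable [Fact (1 ≤ p)]

theorem lp_norm_sum_single [DecidableEq ι] (hp : p ≠ ⊤) (c : ι → 𝕜) (s : Finset ι) :
    ‖∑ i ∈ s, lp.single (E := fun _ : ι => 𝕜) p i (c i)‖ =
      (∑ i ∈ s, ‖c i‖ ^ p.toReal) ^ (1 / p.toReal) := by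
  have hp₀ : 0 < p.toReal := (ENNReal.toReal_pos_iff_ne_top p).2 hp
  rw [← lp.norm_sum_single hp₀, one_div, Real.rpow_rpow_inv (norm_nonneg _) hp₀.ne']

theorem lp_tendsto_sum_rpow_norm (hp : p ≠ ⊤) (a : lp (fun _ : ι => 𝕜) p) :
    Tendsto (fun s : Finset ι => (∑ i ∈ s, ‖a i‖ ^ p.toReal) ^ (1 / p.toReal)) atTop
      (nhds ‖a‖) := by
  classical
  simp_rw [← lp_norm_sum_single hp]
  exact (lp.hasSum_single hp a).norm

/-- `θ : ℓ^p → E` is the synthesis operator of the family `τ`. The index type is arbitrary, so the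
series `∑ a_i τ_i` is summed unconditionally; over `ℕ` with `p < ∞` this is the same as convergence
of its partial sums, see `isSynthesisOperator_iff_tendsto_sum_range`. -/
def IsSynthesisOperator (θ : lp (fun _ : ι => 𝕜) p →L[𝕜] E) (τ : ι → E) : Prop :=
  ∀ a : lp (fun _ : ι => 𝕜) p, HasSum (fun i => a i • τ i) (θ a)

theorem isSynthesisOperator_of_map_single [DecidableEq ι] (hp : p ≠ ⊤)
    {θ : lp (fun _ : ι => 𝕜) p →L[𝕜] E} {τ : ι → E}
    (h : ∀ i c, θ (lp.single p i c) = c • τ i) : IsSynthesisOperator θ τ := fun a => by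
  simpa only [h] using θ.hasSum (lp.hasSum_single hp a)

theorem isSynthesisOperator_iff_tendsto_sum_range (hp : p ≠ ⊤)
    {θ : lp (fun _ : ℕ => 𝕜) p →L[𝕜] E} {τ : ℕ → E} :
    IsSynthesisOperator θ τ ↔ ∀ a : lp (fun _ : ℕ => 𝕜) p,
      Tendsto (fun N => ∑ n ∈ Finset.range N, a n • τ n) atTop (nhds (θ a)) :=
  ⟨fun h a => (h a).tendsto_sum_nat, fun h => isSynthesisOperator_of_map_single hp fun i c =>
    tendsto_nhds_unique (h _) (hasSum_lp_single_smul τ i c).tendsto_sum_nat⟩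

theorem IsSynthesisOperator.map_sum_single [DecidableEq ι] {θ : lp (fun _ : ι => 𝕜) p →L[𝕜] E}
    {τ : ι → E} (h : IsSynthesisOperator θ τ) (c : ι → 𝕜) (s : Finset ι) :
    θ (∑ i ∈ s, lp.single p i (c i)) = ∑ i ∈ s, c i • τ i := by
  rw [map_sum]
  exact Finset.sum_congr rfl fun i _ => (h _).unique (hasSum_lp_single_smul τ i (c i))

theorem IsSynthesisOperator.norm_sum_smul_le (hp : p ≠ ⊤) {θ : lp (fun _ : ι => 𝕜) p →L[𝕜] E}
    {τ : ι → E} (h : IsSynthesisOperator θ τ) (c : ι → 𝕜) (s : Finset ι) :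
    ‖∑ i ∈ s, c i • τ i‖ ≤ ‖θ‖ * (∑ i ∈ s, ‖c i‖ ^ p.toReal) ^ (1 / p.toReal) := by
  classical
  rw [← h.map_sum_single, ← lp_norm_sum_single hp]
  exact θ.le_opNorm _

theorem exists_isSynthesisOperator_of_norm_sum_le [CompleteSpace E] (hp : p ≠ ⊤) {ω : ι → E} {C : ℝ}
    (h : ∀ (s : Finset ι) (c : ι → 𝕜),
      ‖∑ i ∈ s, c i • ω i‖ ≤ C * (∑ i ∈ s, ‖c i‖ ^ p.toReal) ^ (1 / p.toReal)) :
    ∃ θ : lp (fun _ : ι => 𝕜) p →L[𝕜] E, IsSynthesisOperator θ ω := by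
  classical
  have hω (a : lp (fun _ : ι => 𝕜) p) : HasSum (fun i => a i • ω i) (∑' i, a i • ω i) :=
    (summable_of_norm_sum_le (lp.hasSum_single hp a).summable fun s =>
      (lp_norm_sum_single hp a s).symm ▸ h s a).hasSum
  let θ : lp (fun _ : ι => 𝕜) p →ₗ[𝕜] E :=
    { toFun := fun a => ∑' i, a i • ω i
      map_add' := fun a b => (hω (a + b)).unique <| by
        simpa only [lp.coeFn_add, Pi.add_apply, add_smul] using (hω a).add (hω b)
      map_smul' := fun r a => (hω (r • a)).unique <| by
        simpa only [lp.coeFn_smul, Pi.smul_apply, smul_assoc, RingHom.id_apply] using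
          (hω a).const_smul r }
  have θ_bound (a : lp (fun _ : ι => 𝕜) p) : ‖θ a‖ ≤ C * ‖a‖ :=
    le_of_tendsto_of_tendsto' (hω a).norm ((lp_tendsto_sum_rpow_norm hp a).const_mul C)
      fun s => h s a
  exact ⟨θ.mkContinuous C θ_bound, hω⟩

end Synthesis

section Perturbation

variable {ι E : Type*} [NormedAddCommGroup E]

/-- The Paley–Wiener type condition that `ω` is close to `τ`, with weights `α` on the combinations
of `τ`, `β` on those of `ω` and `γ` on the `ℓ^p` norm of the coefficients, which range over the
finitely supported families in `𝕜`. -/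
def IsPaleyWienerPerturbation (𝕜 : Type*) [NormedField 𝕜] [NormedSpace 𝕜 E] (p : ℝ≥0∞)
    (α β γ : ℝ) (τ ω : ι → E) : Prop :=
  ∀ (s : Finset ι) (c : ι → 𝕜),
    ‖∑ i ∈ s, c i • (τ i - ω i)‖ ≤
      α * ‖∑ i ∈ s, c i • τ i‖ +
      γ * (∑ i ∈ s, ‖c i‖ ^ p.toReal) ^ (1 / p.toReal) +
      β * ‖∑ i ∈ s, c i • ω i‖

theorem isPaleyWienerPerturbation_of_range {𝕜 : Type*} [NormedField 𝕜] [NormedSpace 𝕜 E]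
    {p : ℝ≥0∞} {α β γ : ℝ} {τ ω : ℕ → E} (hp : 0 < p.toReal)
    (h : ∀ (m : ℕ) (c : ℕ → 𝕜), 1 ≤ m →
      ‖∑ n ∈ Finset.range m, c n • (τ n - ω n)‖ ≤
        α * ‖∑ n ∈ Finset.range m, c n • τ n‖ +
        γ * (∑ n ∈ Finset.range m, ‖c n‖ ^ p.toReal) ^ (1 / p.toReal) +
        β * ‖∑ n ∈ Finset.range m, c n • ω n‖) :
    IsPaleyWienerPerturbation 𝕜 p α β γ τ ω := fun s c => by
  obtain ⟨m, hm⟩ := s.exists_nat_subset_range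
  have hs : s ⊆ Finset.range (m + 1) := hm.trans (Finset.range_subset_range.2 m.le_succ)
  have h_smul (v : ℕ → E) : ∑ n ∈ Finset.range (m + 1), Set.indicator (↑s) c n • v n =
      ∑ n ∈ s, c n • v n :=
    Finset.sum_indicator_subset_of_eq_zero c (fun n z => z • v n) hs fun n => zero_smul 𝕜 (v n)
  have h_norm : ∑ n ∈ Finset.range (m + 1), ‖Set.indicator (↑s) c n‖ ^ p.toReal =
      ∑ n ∈ s, ‖c n‖ ^ p.toReal :=
    Finset.sum_indicator_subset_of_eq_zero c (fun _ z => ‖z‖ ^ p.toReal) hs fun _ => by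
      rw [norm_zero, Real.zero_rpow hp.ne']
  simpa only [h_smul, h_norm] using h (m + 1) (Set.indicator (↑s) c) m.succ_pos

variable {𝕜 : Type*} [NontriviallyNormedField 𝕜] [NormedSpace 𝕜 E] {p : ℝ≥0∞} [Fact (1 ≤ p)]
  {τ ω : ι → E} {θτ θω : lp (fun _ : ι => 𝕜) p →L[𝕜] E} {α β γ : ℝ}

theorem IsPaleyWienerPerturbation.exists_isSynthesisOperator [CompleteSpace E] (hp : p ≠ ⊤)
    (h : IsPaleyWienerPerturbation 𝕜 p α β γ τ ω) (hτ : IsSynthesisOperator θτ τ) (hα : 0 ≤ α)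
    (hβ : β < 1) : ∃ θω : lp (fun _ : ι => 𝕜) p →L[𝕜] E, IsSynthesisOperator θω ω := by
  refine exists_isSynthesisOperator_of_norm_sum_le (C := ((1 + α) * ‖θτ‖ + γ) / (1 - β)) hp
    fun s c => ?_
  have : 0 < 1 - β := sub_pos.2 hβ
  have h_sub := h s c
  simp only [smul_sub, Finset.sum_sub_distrib] at h_sub
  set r := (∑ i ∈ s, ‖c i‖ ^ p.toReal) ^ (1 / p.toReal)
  calc ‖∑ i ∈ s, c i • ω i‖ ≤ ((1 + α) * ‖∑ i ∈ s, c i • τ i‖ + γ * r) / (1 - β) :=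
        norm_le_of_norm_sub_le hβ h_sub
    _ ≤ ((1 + α) * (‖θτ‖ * r) + γ * r) / (1 - β) := by gcongr; exact hτ.norm_sum_smul_le hp c s
    _ = ((1 + α) * ‖θτ‖ + γ) / (1 - β) * r := by ring

theorem IsPaleyWienerPerturbation.norm_sub_le (hp : p ≠ ⊤)
    (h : IsPaleyWienerPerturbation 𝕜 p α β γ τ ω) (hτ : IsSynthesisOperator θτ τ)
    (hω : IsSynthesisOperator θω ω) (a : lp (fun _ : ι => 𝕜) p) :
    ‖θτ a - θω a‖ ≤ α * ‖θτ a‖ + γ * ‖a‖ + β * ‖θω a‖ := by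
  have h_sub : HasSum (fun i => a i • (τ i - ω i)) (θτ a - θω a) := by
    simpa only [smul_sub] using (hτ a).sub (hω a)
  exact le_of_tendsto_of_tendsto' h_sub.norm
    ((((hτ a).norm.const_mul α).add ((lp_tendsto_sum_rpow_norm hp a).const_mul γ)).add
      ((hω a).norm.const_mul β)) fun s => h s a

end Perturbation

theorem pASF_perturbation_general {𝕜 ι E : Type*} [RCLike 𝕜] [NormedAddCommGroup E]
    [NormedSpace 𝕜 E] [CompleteSpace E] {p : ℝ≥0∞} [Fact (1 ≤ p)] (hp : p ≠ ⊤) {τ ω : ι → E}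
    {θf : E →L[𝕜] lp (fun _ : ι => 𝕜) p} {θτ : lp (fun _ : ι => 𝕜) p →L[𝕜] E} {S : E ≃L[𝕜] E}
    (hτ : IsSynthesisOperator θτ τ) (hS : (S : E →L[𝕜] E) = θτ.comp θf)
    {α β γ : ℝ} (hα : 0 ≤ α) (hβ : 0 ≤ β) (hγ : 0 ≤ γ)
    (hmax : max (α + γ * ‖θf.comp (S.symm : E →L[𝕜] E)‖) β < 1)
    (hper : IsPaleyWienerPerturbation 𝕜 p α β γ τ ω) :
    ∃ (θω : lp (fun _ : ι => 𝕜) p →L[𝕜] E) (Sω : E ≃L[𝕜] E),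
      IsSynthesisOperator θω ω ∧
      (Sω : E →L[𝕜] E) = θω.comp θf ∧
      (∀ x : E,
        (1 - (α + γ * ‖θf.comp (S.symm : E →L[𝕜] E)‖)) /
            ((1 + β) * ‖(S.symm : E →L[𝕜] E)‖) * ‖x‖ ≤ ‖Sω x‖) ∧
      (∀ x : E,
        ‖Sω x‖ ≤ ((1 + α) / (1 - β) * ‖θτ‖ + γ / (1 - β)) * ‖θf‖ * ‖x‖) := by
  obtain ⟨hl, hβ'⟩ := max_lt_iff.1 hmax
  obtain ⟨θω, hω⟩ := hper.exists_isSynthesisOperator hp hτ hα hβ'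
  have hθ := hper.norm_sub_le hp hτ hω
  have hT := norm_sub_comp_le hS hγ hθ
  obtain ⟨Sω, hSω⟩ := exists_continuousLinearEquiv_of_norm_sub_le S (θω.comp θf) hl hβ hβ' hT
  have hSω_apply (x : E) : Sω x = (θω.comp θf) x := DFunLike.congr_fun hSω x
  refine ⟨θω, Sω, hω, hSω, fun x => ?_, fun x => ?_⟩
  · rw [hSω_apply]
    exact le_norm_of_norm_sub_le S hl.le hβ hβ'.le (hT x)
  · calc ‖Sω x‖ ≤ ‖θω‖ * ‖θf‖ * ‖x‖ := by
          rw [hSω_apply]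
          exact (θω.comp θf).le_of_opNorm_le (θω.opNorm_comp_le θf) x
      _ ≤ ((1 + α) / (1 - β) * ‖θτ‖ + γ / (1 - β)) * ‖θf‖ * ‖x‖ := by
          gcongr
          exact opNorm_le_of_norm_sub_le hα hγ hβ' hθ

/-- **Perturbation (Paley–Wiener type) theorem for p-ASFs.** Let `((f_n),(τ_n))` be a p-ASF for
`X` with analysis operator `θf`, synthesis operator `θτ` and frame operator `S = θτ θf`, and let
`(ω_n)` be a sequence in `X` satisfying the stated perturbation inequality with parameters
`α, β, γ ≥ 0`, `max {α + γ‖θf S⁻¹‖, β} < 1`.  Then `((f_n),(ω_n))` is a p-ASF for `X` whose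
frame operator `S_{f,ω}` satisfies `a‖x‖ ≤ ‖S_{f,ω} x‖ ≤ b‖x‖` with
`a = (1 - (α + γ‖θf S⁻¹‖))/((1+β)‖S⁻¹‖)` and `b = ((1+α)/(1-β)·‖θτ‖ + γ/(1-β))·‖θf‖`. -/
theorem pASF_perturbation (p : ℝ≥0∞) [Fact (1 ≤ p)] (hp : p ≠ ⊤)
    (f : ℕ → X →L[𝕂] 𝕂) (τ ω : ℕ → X)
    (θf : X →L[𝕂] lp (fun _ : ℕ => 𝕂) p) (θτ : lp (fun _ : ℕ => 𝕂) p →L[𝕂] X)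
    (S : X ≃L[𝕂] X)
    (hθf : ∀ (x : X) (n : ℕ), θf x n = f n x)
    (hθτ : ∀ a : lp (fun _ : ℕ => 𝕂) p,
      Tendsto (fun N => ∑ n ∈ Finset.range N, a n • τ n) atTop (nhds (θτ a)))
    (hS : (S : X →L[𝕂] X) = θτ.comp θf)
    (α β γ : ℝ) (hα : 0 ≤ α) (hβ : 0 ≤ β) (hγ : 0 ≤ γ)
    (hmax : max (α + γ * ‖θf.comp (S.symm : X →L[𝕂] X)‖) β < 1)
    (hper : ∀ (m : ℕ) (c : ℕ → 𝕂), 1 ≤ m →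
      ‖∑ n ∈ Finset.range m, c n • (τ n - ω n)‖ ≤
        α * ‖∑ n ∈ Finset.range m, c n • τ n‖ +
        γ * (∑ n ∈ Finset.range m, ‖c n‖ ^ p.toReal) ^ (1 / p.toReal) +
        β * ‖∑ n ∈ Finset.range m, c n • ω n‖) :
    ∃ (θω : lp (fun _ : ℕ => 𝕂) p →L[𝕂] X) (Sω : X ≃L[𝕂] X),
      (∀ a : lp (fun _ : ℕ => 𝕂) p,
        Tendsto (fun N => ∑ n ∈ Finset.range N, a n • ω n) atTop (nhds (θω a))) ∧
      (Sω : X →L[𝕂] X) = θω.comp θf ∧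
      (∀ x : X,
        (1 - (α + γ * ‖θf.comp (S.symm : X →L[𝕂] X)‖)) /
            ((1 + β) * ‖(S.symm : X →L[𝕂] X)‖) * ‖x‖ ≤ ‖Sω x‖) ∧
      (∀ x : X,
        ‖Sω x‖ ≤ ((1 + α) / (1 - β) * ‖θτ‖ + γ / (1 - β)) * ‖θf‖ * ‖x‖) := by
  simpa only [isSynthesisOperator_iff_tendsto_sum_range hp] using
    pASF_perturbation_general hp ((isSynthesisOperator_iff_tendsto_sum_range hp).2 hθτ) hS hα hβ hγ
      hmax (isPaleyWienerPerturbation_of_range ((ENNReal.toReal_pos_iff_ne_top p).2 hp) hper)
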